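/- Let p be an odd prime, r an integer whose residue class generates (ℤ/p²)ˣ, u a unit of ℤ_(p), and n ≥ 1, t ≥ 1 integers with t not divisible by p. Let F be the free ℤ_(p)-module on generators x, y, let N ⊆ F be the submodule generated by p^{n+t(p-1)}·y and p^n·x + u·p^{n-1}(p^{t(p-1)}-1)·y, and let Ψ be the ℤ_(p)-linear endomorphism of F with Ψ(x) = r^n·x + (u/p)·r^n(r^{t(p-1)}-1)·y and Ψ(y) = r^{n+t(p-1)}·y. Then Ψ(N) ⊆ N, and for every integer m the induced endomorphism φ_m = Ψ - r^m·id of F/N satisfies: φ_m is injective if m is not congruent to n modulo p-1; and if m = n + (p-1)i for an integer i, then ker φ_m is cyclic of order p^e, where e = min(ν_p(i)+2, n) if i is not congruent to t mod p; e = min(ν_p(i-t)+2, t(p-1)+n) if i ≡ t mod p and n > 1; and e = min(ν_p(i - t - t·p^{t(p-1)})+1, t(p-1)+2) if i ≡ t mod p and n = 1. -/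

import Mathlib

/-!
Write `T = t(p-1)`, `π = p`, `w = u(π^T - 1)`. On the basis `x, y` the map `Ψ - r^m` is lower
triangular with diagonal `a = r^n - r^m`, `d = r^(n+T) - r^m` and off-diagonal entry `b`, where
`π b = u(d - a)`; since `p ∤ t` and `r` generates `(ℤ/p²)ˣ`, `b` is a unit. Solving for the
coordinates with respect to the basis of `N`, a vector `α x + β y` is sent into `N` iff
`π^n ∣ a α` and `π^(n+T) ∣ c α + d β`, where `π c = π b - w a = u(d - π^T a)`
(`inN_image_iff`). If `m ≢ n mod p-1`, then `a` and `d` are units and only `N` is sent into `N`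
(`inN_of_units`).

If `m = n + (p-1) i`, then `exists_theta`, the expansion `(1 + p g)^j = 1 + p j θ` with
`θ ≡ g mod p`, gives `ν(a) = ν(i) + 1` and `ν(d) = ν(i-t) + 1`. The lattice `K` cut out by the two
divisibility conditions has an explicit basis, depending on which of `c`, `d` is the better pivot.
Thanks to the identity `π c + w d = π^(T+1) b` with `b` a unit, one of the two basis vectors
is always a multiple of the other modulo `N`, so the kernel `K/N` is cyclic, and its order is read
off (`cycData_of_isUnit`, `cycData_of_pivot`, `cycData_of_dvd`, `cycData_of_zero`). For `n = 1` and
`i ≡ t mod p`, the order depends on `ν(c)` up to `T + 1`, and `c` is a unit times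
`i - t - t p^T` modulo `p^(T+1)`.
-/

set_option synthInstance.maxHeartbeats 1000000
set_option maxHeartbeats 1000000

noncomputable section

/-- The `p`-adic valuation of an integer, valued in `ℕ∞`, with `ν_p 0 = ⊤`. -/
def nuE (p : ℕ) (x : ℤ) : ℕ∞ :=
  if x = 0 then ⊤ else (padicValInt p x : ℕ∞)

/-- The localization `ℤ_(p)` of the integers at the prime `p`, realized as the subring
of `ℚ` consisting of fractions whose denominator is prime to `p`. -/
def ZLoc (p : ℕ) [hp : Fact p.Prime] : Subring ℚ where
  carrier := {q : ℚ | ¬ (p : ℕ) ∣ q.den}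
  zero_mem' := by simp [Rat.den_zero, Nat.dvd_one, hp.out.ne_one]
  one_mem' := by simp [Rat.den_one, Nat.dvd_one, hp.out.ne_one]
  add_mem' := by
    intro a b ha hb hd
    rcases (Nat.Prime.dvd_mul hp.out).mp (hd.trans (Rat.add_den_dvd a b)) with h | h
    · exact ha h
    · exact hb h
  mul_mem' := by
    intro a b ha hb hd
    rcases (Nat.Prime.dvd_mul hp.out).mp (hd.trans (Rat.mul_den_dvd a b)) with h | h
    · exact ha h
    · exact hb h
  neg_mem' := by
    intro a ha hd
    rw [Rat.neg_den] at hd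
    exact ha hd

/-- The free `ℤ_(p)`-module on two generators `x = ![1,0]`, `y = ![0,1]`,
realized as a lattice in `ℚ²`. -/
def latt2 (p : ℕ) [Fact p.Prime] : Submodule (ZLoc p) (Fin 2 → ℚ) :=
  Submodule.span (ZLoc p) {![1, 0], ![0, 1]}

/-- `(α, β)` lies in the span of `(0, π^(n+1+T))` and `(π^(n+1), w π^n)`. The exponent `n`
is shifted by one against the sphere dimension parameter, which avoids truncated subtraction. -/
def InN {A : Type*} [CommRing A] (π w : A) (n T : ℕ) (α β : A) : Prop :=
  ∃ s k, α = π ^ (n + 1) * s ∧ β = w * π ^ n * s + π ^ (n + 1 + T) * k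

/-- The condition that `Ψ - r^m` sends `α x + β y` into `N`, after elimination of the coordinates
of `N`; here `a`, `d` are the diagonal entries of `Ψ - r^m`, and `c` is its off-diagonal entry
corrected by the off-diagonal entry of the basis of `N` (see `inN_image_iff`). -/
def InK {A : Type*} [CommRing A] (π a c d : A) (n T : ℕ) (α β : A) : Prop :=
  π ^ (n + 1) ∣ a * α ∧ π ^ (n + 1 + T) ∣ c * α + d * β

/-- The module `K / N` is generated by the class of one vector `(g, h)`, whose annihilator
is `(π^e)`; here `K` and `N` are cut out by `InK` and `InN`. -/
def CycData {A : Type*} [CommRing A] (π w a c d : A) (n T e : ℕ) : Prop :=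
  ∃ g h : A, InK π a c d n T g h ∧
    (∀ α β, InK π a c d n T α β → ∃ z, InN π w n T (α - z * g) (β - z * h)) ∧
    ∀ z, InN π w n T (z * g) (z * h) ↔ π ^ e ∣ z

/-! ### Linear algebra over a domain with a distinguished element `π` -/

section
variable {A : Type*} [CommRing A] [IsDomain A] {π u w a b c d : A} {n T e : ℕ}

theorem inN_image_iff (hπ : π ≠ 0) (hc : π * c = π * b - w * a) (α β : A) :
    InN π w n T (a * α) (b * α + d * β) ↔ InK π a c d n T α β := by
  constructor
  · rintro ⟨s, k, h1, h2⟩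
    refine ⟨⟨s, h1⟩, ⟨k, ?_⟩⟩
    apply mul_left_cancel₀ hπ
    linear_combination α * hc + π * h2 - w * h1
  · rintro ⟨⟨s, h1⟩, ⟨k, h2⟩⟩
    refine ⟨s, k, h1, ?_⟩
    apply mul_left_cancel₀ hπ
    linear_combination - α * hc + π * h2 + w * h1

/-- The case `c` a unit: `K` has basis `(π^(n+1+T), 0)` and `π^s (-d/c, 1)`, and the first vector
is a multiple of the second modulo `N`, because `b` is a unit. -/
theorem cycData_of_isUnit (hπ : π ≠ 0) (hI : π * c + w * d = π ^ (T + 1) * b)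
    (hb : IsUnit b) (hcu : IsUnit c) {s : ℕ} (hs : s + e = n + 1) (he : 1 ≤ e)
    (H : ∀ β, π ^ (n + 1) ∣ a * d * β ↔ π ^ s ∣ β) : CycData π w a c d n T e := by
  obtain ⟨c', hc'⟩ := hcu.exists_right_inv
  obtain ⟨b', hb'⟩ := hb.exists_right_inv
  obtain ⟨e, rfl⟩ := Nat.exists_eq_add_of_le' he
  obtain rfl : n = s + e := by omega
  refine ⟨- π ^ s * d * c', π ^ s, ⟨?_, ⟨0, ?_⟩⟩, ?_, ?_⟩
  · obtain ⟨q, hq⟩ := (H (π ^ s)).2 dvd_rfl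
    exact ⟨-c' * q, by linear_combination -c' * hq⟩
  · linear_combination - π ^ s * d * hc'
  · rintro α β ⟨⟨q, h1⟩, ⟨k, h2⟩⟩
    obtain ⟨y, rfl⟩ := (H β).1 ⟨a * k * π ^ T - c * q, by
      linear_combination a * h2 - c * h1⟩
    refine ⟨y - k * b' * w * π ^ e, k * b', 0, ?_, by ring⟩
    apply mul_left_cancel₀ hcu.ne_zero
    linear_combination h2 + (y - k * b' * w * π ^ e) * π ^ s * d * hc' -
      k * b' * π ^ (s + e) * hI - k * π ^ (s + e + 1 + T) * hb'
  · intro z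
    constructor
    · rintro ⟨q, k, h1, h2⟩
      refine ⟨k * c * b', ?_⟩
      have h3 : z * d = - c * π ^ (e + 1) * q := by
        apply mul_left_cancel₀ (pow_ne_zero s hπ)
        linear_combination - c * h1 - π ^ s * z * d * hc'
      have h4 : z * b = π ^ (e + 1) * (k * c) := by
        apply mul_left_cancel₀ (pow_ne_zero (s + T + 1) hπ)
        linear_combination - π ^ s * z * hI + π * c * h2 + π ^ s * w * h3
      linear_combination b' * h4 - z * hb'
    · rintro ⟨y, rfl⟩
      refine ⟨- y * d * c', y * b * c', by ring, ?_⟩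
      linear_combination - π ^ (s + e + 1) * y * hc' + c' * π ^ (s + e) * y * hI

/-- The case where `d` divides both `c π^n` and `π^(n+T)`: `K` has basis `(π^n, -c π^n/d)` and
`(0, π^(n+1+T)/d)`, and the second vector is a multiple of the first modulo `N`. -/
theorem cycData_of_pivot (hπ : π ≠ 0) (hI : π * c + w * d = π ^ (T + 1) * b)
    (hc : π * c = u * (d - π ^ T * a))
    (hb : IsUnit b) {a₀ d₀ : A} (ha : a = π * a₀) (ha₀ : IsUnit a₀) {k : ℕ}
    (hd : d = π ^ (k + 1) * d₀) (hd₀ : IsUnit d₀) (hn : 1 ≤ n) (hk : k + 1 ≤ n + T) :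
    CycData π w a c d n T (k + 2) := by
  obtain ⟨a', ha'⟩ := ha₀.exists_right_inv
  obtain ⟨b', hb'⟩ := hb.exists_right_inv
  obtain ⟨d', hd'⟩ := hd₀.exists_right_inv
  obtain ⟨n, rfl⟩ := Nat.exists_eq_add_of_le' hn
  obtain ⟨l, hl⟩ := Nat.exists_eq_add_of_le' hk
  have hl' : n + T = l + k := by omega
  set h : A := u * π ^ n - u * π ^ l * a₀ * d' with hh
  have hpl : (π ^ n * π ^ T : A) = π ^ l * π ^ k := by rw [← pow_add, ← pow_add, hl']
  have hdh : c * π ^ (n + 1) = d * h := by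
    rw [hh]
    linear_combination π ^ n * hc - u * π ^ n * π ^ T * ha - u * π * a₀ * hpl
      + u * a₀ * π ^ l * d' * hd + u * a₀ * π ^ l * π ^ (k + 1) * hd'
  have hdne : d ≠ 0 := by rw [hd]; exact mul_ne_zero (pow_ne_zero _ hπ) hd₀.ne_zero
  -- The generator `(π^(n+2), w π^(n+1))` of `N` is `π • (π^(n+1), -h)` plus a unit multiple of
  -- `(0, π^(l+1))`, which eliminates the second basis vector of `K`.
  have hrel : w * π ^ (n + 1) + π * h = π ^ (l + 1) * (b * d') := by
    apply mul_left_cancel₀ hdne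
    linear_combination π ^ (n + 1) * hI - π * hdh + π ^ 2 * b * hpl
      - π ^ (l + 1) * b * d' * hd - π ^ (l + 1) * b * π ^ (k + 1) * hd'
  refine ⟨π ^ (n + 1), -h, ⟨⟨a₀, by rw [ha]; ring⟩, ⟨0, by linear_combination hdh⟩⟩, ?_, ?_⟩
  · rintro α β ⟨⟨q, h1⟩, ⟨m, h2⟩⟩
    have h3 : α = π ^ (n + 1) * (a' * q) := by
      apply mul_left_cancel₀ hπ
      linear_combination a' * h1 - a' * α * ha - π * α * ha'
    have h4 : h * (a' * q) + β = π ^ (l + 1) * (m * d') := by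
      apply mul_left_cancel₀ hdne
      linear_combination h2 - c * h3 - a' * q * hdh + π ^ 2 * m * hpl
        - π ^ (l + 1) * m * d' * hd - π ^ (l + 1) * m * π ^ (k + 1) * hd'
    refine ⟨a' * q - m * b' * π, m * b', 0, by linear_combination h3, ?_⟩
    linear_combination h4 - m * b' * hrel - π ^ (l + 1) * m * d' * hb'
  · intro z
    constructor
    · rintro ⟨s, m, h1, h2⟩
      have h3 : z = π * s := by
        apply mul_left_cancel₀ (pow_ne_zero (n + 1) hπ)
        linear_combination h1
      have h4 : s * b = - π ^ (k + 1) * m * d₀ := by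
        apply mul_left_cancel₀ (pow_ne_zero (l + 1) hπ)
        linear_combination - s * d₀ * hrel - π ^ (l + 1) * b * s * hd' - d₀ * h2 - d₀ * h * h3 - π ^ 2 * m * d₀ * hpl
      exact ⟨- m * d₀ * b', by linear_combination h3 + π * b' * h4 - π * s * hb'⟩
    · rintro ⟨y, rfl⟩
      refine ⟨π ^ (k + 1) * y, - y * b * d', by ring, ?_⟩
      linear_combination - π ^ (k + 1) * y * hrel + d' * b * y * π ^ 2 * hpl

/-- The case `d ≡ 0 mod π^(n+1+T)`: `c` has valuation exactly `T`, so `K` consists of the vectors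
with `π^(n+1) ∣ α`, and `K / N` is generated by `y`. -/
theorem cycData_of_dvd (hπ : π ≠ 0) (hc : π * c = u * (d - π ^ T * a)) (hu : IsUnit u)
    (hloc : ∀ x, IsUnit x → ∀ y, IsUnit (x + π * y))
    {a₀ : A} (ha : a = π * a₀) (ha₀ : IsUnit a₀)
    (hd : π ^ (n + 1 + T) ∣ d) (hn : 1 ≤ n) :
    CycData π w a c d n T (n + 1 + T) := by
  obtain ⟨a', ha'⟩ := ha₀.exists_right_inv
  obtain ⟨n, rfl⟩ := Nat.exists_eq_add_of_le' hn
  obtain ⟨d₀, hd₀⟩ := hd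
  have hv : IsUnit (u * (-a₀ + π * (π ^ n * d₀))) := hu.mul (hloc _ ha₀.neg _)
  obtain ⟨v, hv⟩ : ∃ v, u * (-a₀ + π * (π ^ n * d₀)) * v = 1 := hv.exists_right_inv
  have hcv : c = π ^ T * (u * (-a₀ + π * (π ^ n * d₀))) := by
    apply mul_left_cancel₀ hπ
    linear_combination hc + u * hd₀ - u * π ^ T * ha
  refine ⟨0, 1, ⟨by simp, ⟨d₀, by linear_combination hd₀⟩⟩, ?_, ?_⟩
  · rintro α β ⟨⟨q, h1⟩, ⟨m, h2⟩⟩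
    have h3 : α = π ^ (n + 1) * (a' * q) := by
      apply mul_left_cancel₀ hπ
      linear_combination a' * h1 - a' * α * ha - π * α * ha'
    have h4 : a' * q = π * ((m - d₀ * β) * v) := by
      apply mul_left_cancel₀ (pow_ne_zero (n + 1 + T) hπ)
      linear_combination v * h2 - v * β * hd₀ - v * c * h3 - v * π ^ (n + 1) * a' * q * hcv
        - π ^ (n + 1 + T) * a' * q * hv
    refine ⟨β - w * π ^ (n + 1) * ((m - d₀ * β) * v), (m - d₀ * β) * v, 0, ?_, by ring⟩
    linear_combination h3 + π ^ (n + 1) * h4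
  · intro z
    constructor
    · rintro ⟨s, k, h1, h2⟩
      have hs : s = 0 := by
        apply mul_left_cancel₀ (pow_ne_zero (n + 1 + 1) hπ)
        linear_combination - h1
      exact ⟨k, by linear_combination h2 + w * π ^ (n + 1) * hs⟩
    · rintro ⟨y, rfl⟩
      exact ⟨0, y, by ring, by ring⟩

/-- For `N` with lowest exponent (`p^1 x + ...`), `w y ≡ -π x` makes `F / N` itself cyclic on `x`,
of order `π^(T+2)`, and `K / N` is the subgroup generated by `π^f x`. -/
theorem cycData_of_zero (hπ : π ≠ 0) (hI : π * c + w * d = π ^ (T + 1) * b)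
    (hw : IsUnit w) (ha : π ∣ a) {f : ℕ} (hf : f + e = T + 2)
    (H : ∀ z, π ^ (T + 1) ∣ c * z ↔ π ^ f ∣ z) : CycData π w a c d 0 T e := by
  obtain ⟨w', hw'⟩ := hw.exists_right_inv
  have hmul : ∀ z, InN π w 0 T z 0 ↔ π ^ (T + 2) ∣ z := by
    intro z
    constructor
    · rintro ⟨s, k, h1, h2⟩
      exact ⟨- w' * k, by linear_combination h1 - w' * π * h2 - π * s * hw'⟩
    · rintro ⟨y, rfl⟩
      exact ⟨π ^ (T + 1) * y, - w * y, by ring, by ring⟩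
  refine ⟨π ^ f, 0, ⟨?_, ?_⟩, ?_, ?_⟩
  · simpa using ha.mul_right _
  · simpa [add_comm 1 T] using (H (π ^ f)).2 dvd_rfl
  · rintro α β ⟨-, ⟨m, h2⟩⟩
    obtain ⟨y, hy⟩ := (H (α - π * w' * β)).1 ⟨m - b * w' * β, by
      linear_combination h2 - w' * β * hI + d * β * hw'⟩
    exact ⟨y, w' * β, 0, by linear_combination hy, by linear_combination - β * hw'⟩
  · intro z
    rw [mul_zero, hmul, ← hf, pow_add, mul_comm z, mul_dvd_mul_iff_left (pow_ne_zero f hπ)]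

/-- If both eigenvalues of `Ψ - r^m` are units, then only vectors of `N` are sent into `N`. -/
theorem inN_of_units (hπb : π * b = u * (d - a)) (hw : w = u * (π ^ T - 1))
    (hau : IsUnit a) (hdu : IsUnit d) (hπ : π ≠ 0)
    {α β : A} (h : InN π w n T (a * α) (b * α + d * β)) : InN π w n T α β := by
  obtain ⟨s, k, h1, h2⟩ := h
  obtain ⟨a', ha'⟩ := hau.exists_right_inv
  obtain ⟨d', hd'⟩ := hdu.exists_right_inv
  have h3 : α = π ^ (n + 1) * (a' * s) := by linear_combination a' * h1 - α * ha'
  refine ⟨a' * s, d' * (k - b * a' * s), h3, ?_⟩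
  apply mul_left_cancel₀ hdu.ne_zero
  apply mul_left_cancel₀ hπ
  linear_combination π * h2 - π * b * h3 - π ^ (n + 1) * w * s * ha' +
    π ^ (n + 1) * s * a' * (a - d) * hw + π ^ (n + 1) * s * a' * (π ^ T - 1) * hπb +
    π ^ (n + 2 + T) * (b * s * a' - k) * hd'
end

/-! ### The local ring `ℤ_(p)` and the generator `r` -/

section local_ring
variable {p : ℕ} [hp : Fact p.Prime]

theorem mem_ZLoc {q : ℚ} : q ∈ ZLoc p ↔ ¬ p ∣ q.den := Iff.rfl

theorem ZLoc_p_ne_zero : (p : ZLoc p) ≠ 0 := by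
  intro h
  have := congrArg (Subtype.val) h
  simp [hp.out.ne_zero] at this

theorem isUnit_intCast {z : ℤ} (hz : ¬ (p : ℤ) ∣ z) : IsUnit (z : ZLoc p) := by
  have hz0 : z ≠ 0 := by rintro rfl; exact hz (dvd_zero _)
  have hmem : ((z : ℚ)⁻¹) ∈ ZLoc p := by
    rw [mem_ZLoc]
    intro h
    apply hz
    have : ((z : ℚ)⁻¹).den = z.natAbs := by
      simp [hz0]
    rw [this] at h
    exact Int.natCast_dvd.2 h
  refine IsUnit.of_mul_eq_one ⟨(z : ℚ)⁻¹, hmem⟩ ?_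
  ext
  push_cast
  field_simp

/-- Every element of `ℤ_(p)` is a fraction of an integer by an integer prime to `p`. -/
theorem ZLoc_exists_mul (x : ZLoc p) : ∃ z b : ℤ, ¬ (p : ℤ) ∣ b ∧ x * b = z := by
  refine ⟨(x : ℚ).num, (x : ℚ).den, ?_, ?_⟩
  · rw [Int.natCast_dvd_natCast]; exact x.2
  · ext
    push_cast
    exact Rat.mul_den_eq_num _

theorem pow_dvd_intCast_iff {k : ℕ} {z : ℤ} :
    (p : ZLoc p) ^ k ∣ (z : ZLoc p) ↔ (p : ℤ) ^ k ∣ z := by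
  constructor
  · rintro ⟨x, hx⟩
    obtain ⟨y, b, hb, hxb⟩ := ZLoc_exists_mul x
    have h : z * b = p ^ k * y := by
      have : ((z * b : ℤ) : ZLoc p) = ((p ^ k * y : ℤ) : ZLoc p) := by
        push_cast; rw [← hxb, hx]; ring
      exact_mod_cast this
    have hc : IsCoprime ((p : ℤ) ^ k) b :=
      ((Nat.prime_iff_prime_int.1 hp.out).coprime_iff_not_dvd.2 hb).pow_left
    exact hc.dvd_of_dvd_mul_right ⟨y, h⟩
  · rintro ⟨y, rfl⟩
    exact ⟨y, by push_cast; rfl⟩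

theorem dvd_intCast_iff {z : ℤ} : (p : ZLoc p) ∣ (z : ZLoc p) ↔ (p : ℤ) ∣ z := by
  simpa using pow_dvd_intCast_iff (p := p) (k := 1) (z := z)

theorem isUnit_iff {x : ZLoc p} : IsUnit x ↔ ¬ (p : ZLoc p) ∣ x := by
  obtain ⟨z, b, hb, h⟩ := ZLoc_exists_mul x
  have hbu := isUnit_intCast hb
  constructor
  · rintro hx hd
    have h1 : IsUnit (p : ZLoc p) := isUnit_of_dvd_unit hd hx
    have h2 : (p : ZLoc p) ∣ ((1 : ℤ) : ZLoc p) := h1.dvd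
    rw [dvd_intCast_iff] at h2
    exact (Nat.prime_iff_prime_int.1 hp.out).not_dvd_one h2
  · intro hd
    have : ¬ (p : ℤ) ∣ z := by
      rw [← dvd_intCast_iff (p := p), ← h]
      rwa [hbu.dvd_mul_right]
    have hz := isUnit_intCast this
    rw [← h] at hz
    exact isUnit_of_mul_isUnit_left hz

theorem isUnit_add_mul {x : ZLoc p} (hx : IsUnit x) (y : ZLoc p) : IsUnit (x + p * y) := by
  rw [isUnit_iff] at hx ⊢
  intro h
  exact hx ((dvd_add_left (dvd_mul_right _ _)).1 h)

theorem exists_int_approx (x : ZLoc p) (e : ℕ) : ∃ z : ℤ, (p : ZLoc p) ^ e ∣ x - z := by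
  obtain ⟨z, b, hb, h⟩ := ZLoc_exists_mul x
  have hc : IsCoprime ((p : ℤ) ^ e) b :=
      ((Nat.prime_iff_prime_int.1 hp.out).coprime_iff_not_dvd.2 hb).pow_left
  obtain ⟨s, q, hq⟩ := hc
  have hq' : (s : ZLoc p) * p ^ e + q * b = 1 := by exact_mod_cast congrArg (Int.cast (R := ZLoc p)) hq
  refine ⟨z * q, x * s, ?_⟩
  push_cast
  linear_combination - x * hq' + q * h

/-- A module with a generator of annihilator `(p^e)` is cyclic of order `p^e`. -/
theorem nonempty_equiv_zmod {M : Type*} [AddCommGroup M] [Module (ZLoc p) M] (g : M) (e : ℕ)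
    (h1 : ∀ x : M, ∃ z : ZLoc p, x = z • g)
    (h2 : ∀ z : ZLoc p, z • g = 0 ↔ (p : ZLoc p) ^ e ∣ z) : Nonempty (M ≃+ ZMod (p ^ e)) := by
  let f : ℤ →+ M := zmultiplesHom M g
  have hf : ∀ z : ℤ, f z = (z : ZLoc p) • g := fun z => by
    simp [f, Int.cast_smul_eq_zsmul]
  have hsurj : Function.Surjective f := by
    intro x
    obtain ⟨z, rfl⟩ := h1 x
    obtain ⟨y, hy⟩ := exists_int_approx z e
    refine ⟨y, ?_⟩
    rw [hf, eq_comm, ← sub_eq_zero, ← sub_smul, h2]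
    exact hy
  have hker : f.ker = AddSubgroup.zmultiples ((p ^ e : ℕ) : ℤ) := by
    ext z
    rw [AddMonoidHom.mem_ker, hf, h2, pow_dvd_intCast_iff, Int.mem_zmultiples_iff]
    push_cast
    rfl
  exact ⟨(QuotientAddGroup.quotientKerEquivOfSurjective f hsurj).symm.trans
    ((QuotientAddGroup.quotientAddEquivOfEq hker).trans (Int.quotientZMultiplesNatEquivZMod _))⟩

/-- `r^(p-1) = 1 + p g` with `g` prime to `p`, and `r` has order `p - 1` mod `p`; both follow from
`r` having order `p (p - 1)` mod `p²`. -/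
theorem generator_facts (hodd : Odd p) (r : ℤ)
    (hr : ∀ v : (ZMod (p ^ 2))ˣ, ∃ j : ℕ, (v : ZMod (p ^ 2)) = (r : ZMod (p ^ 2)) ^ j) :
    ¬ (p : ℤ) ∣ r ∧ (∃ g : ℤ, r ^ (p - 1) = 1 + p * g ∧ ¬ (p : ℤ) ∣ g) ∧
      ∀ j : ℕ, (p : ℤ) ∣ r ^ j - 1 → p - 1 ∣ j := by
  have hp2 := hp.out.two_le
  have hp3 : 3 ≤ p := by
    rcases hodd with ⟨k, rfl⟩; omega
  have : Fact (2 < p ^ 2) := ⟨by nlinarith⟩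
  have hru : IsUnit (r : ZMod (p ^ 2)) := by
    obtain ⟨j, hj⟩ := hr (-1)
    rcases j with _ | j
    · simp at hj
      exact absurd hj (ZMod.neg_one_ne_one)
    · refine isUnit_of_dvd_unit (dvd_pow_self _ (Nat.succ_ne_zero j)) ?_
      rw [← hj]; exact Units.isUnit _
  have hcop : ¬ (p : ℤ) ∣ r := by
    intro h
    rw [ZMod.coe_int_isUnit_iff_isCoprime] at hru
    have hpu : IsUnit (p : ℤ) := hru.isUnit_of_dvd' (by push_cast; exact dvd_pow_self _ two_ne_zero) h
    exact (Nat.prime_iff_prime_int.1 hp.out).not_isUnit hpu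
  obtain ⟨ρ, hρ⟩ := hru
  have hord : orderOf ρ = p * (p - 1) := by
    rw [orderOf_eq_card_of_forall_mem_zpowers, Nat.card_eq_fintype_card, ZMod.card_units_eq_totient,
      Nat.totient_prime_pow hp.out (by norm_num)]
    · simp
    · intro v
      obtain ⟨j, hj⟩ := hr v
      refine ⟨j, ?_⟩
      ext
      simp [hj, hρ]
  have hpow : ∀ j : ℕ, (p : ℤ) ^ 2 ∣ r ^ j - 1 → p * (p - 1) ∣ j := by
    intro j h
    rw [← hord, orderOf_dvd_iff_pow_eq_one]
    ext
    have : ((r ^ j - 1 : ℤ) : ZMod (p ^ 2)) = 0 := by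
      rw [ZMod.intCast_zmod_eq_zero_iff_dvd]; exact_mod_cast h
    push_cast at this
    rw [Units.val_pow_eq_pow_val, hρ, Units.val_one]
    exact sub_eq_zero.1 this
  refine ⟨hcop, ?_, ?_⟩
  · have h1 : (p : ℤ) ∣ r ^ (p - 1) - 1 :=
      (Int.ModEq.pow_card_sub_one_eq_one hp.out
        ((Nat.prime_iff_prime_int.1 hp.out).coprime_iff_not_dvd.2 hcop).symm).symm.dvd
    obtain ⟨g, hg⟩ := h1
    refine ⟨g, by linear_combination hg, ?_⟩
    rintro ⟨q, rfl⟩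
    have := Nat.le_of_dvd (by omega) (hpow (p - 1) ⟨q, by linear_combination hg⟩)
    nlinarith [Nat.sub_add_cancel (show 1 ≤ p by omega), show 0 < p - 1 by omega]
  · rintro j ⟨g, hg⟩
    have : (p : ℤ) ^ 2 ∣ r ^ (j * p) - 1 := by
      obtain ⟨k, hk⟩ := Polynomial.powAddExpansion (1 : ℤ) (p * g) p
      have h1 : r ^ j = 1 + p * g := by linear_combination hg
      rw [pow_mul, h1, hk]
      exact ⟨g + k * g ^ 2, by simp; ring⟩
    have h2 := hpow _ this
    rw [mul_comm j p] at h2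
    exact Nat.dvd_of_mul_dvd_mul_left (by omega) h2

end local_ring

/-! ### Valuations of differences of powers of `r` -/

section powers
variable {p : ℕ} [hp : Fact p.Prime]

theorem one_add_pow_expansion {A : Type*} [CommRing A] (x : A) (k : ℕ) :
    ∃ q, (1 + x) ^ k = 1 + k * x + (k.choose 2 : A) * x ^ 2 + x ^ 3 * q := by
  induction k with
  | zero => exact ⟨0, by simp⟩
  | succ k ih =>
    obtain ⟨q, hq⟩ := ih
    refine ⟨(k.choose 2 : A) + q + x * q, ?_⟩
    rw [pow_succ, hq, Nat.choose_succ_succ' k 1, Nat.choose_one_right]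
    push_cast
    ring

/-- First-order expansion of powers of `1 + p g`: `(1 + p g)^j = 1 + p j θ` with `θ ≡ g mod p`.
The oddness of `p` enters through `p ∣ p.choose 2`. -/
theorem exists_theta (hodd : Odd p) (ρ : (ZLoc p)ˣ) (g : ZLoc p) (hρ : (ρ : ZLoc p) = 1 + p * g)
    (j : ℤ) : ∃ θ : ZLoc p, ((ρ ^ j : (ZLoc p)ˣ) : ZLoc p) = 1 + p * j * θ ∧
      (p : ZLoc p) ∣ θ - g := by
  -- exponents prime to `p`
  have h1 : ∀ k : ℕ, ¬ p ∣ k → ∃ θ : ZLoc p, (ρ : ZLoc p) ^ k = 1 + p * k * θ ∧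
      (p : ZLoc p) ∣ θ - g := by
    intro k hk
    have hku : IsUnit ((k : ℤ) : ZLoc p) := isUnit_intCast (by rwa [Int.natCast_dvd_natCast])
    obtain ⟨k', hk'⟩ := hku.exists_right_inv
    push_cast at hk'
    obtain ⟨q, hq⟩ := Polynomial.powAddExpansion (1 : ZLoc p) (p * g) k
    refine ⟨g + p * (k' * q * g ^ 2), ?_, ⟨k' * q * g ^ 2, by ring⟩⟩
    rw [hρ, hq]
    simp only [one_pow, mul_one]
    linear_combination hk' * (- (p : ZLoc p) ^ 2 * q * g ^ 2)
  -- multiplication of the exponent by `p`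
  have h2 : ∀ k : ℕ, (∃ θ : ZLoc p, (ρ : ZLoc p) ^ k = 1 + p * k * θ ∧ (p : ZLoc p) ∣ θ - g) →
      ∃ θ : ZLoc p, (ρ : ZLoc p) ^ (p * k) = 1 + p * (p * k : ℕ) * θ ∧ (p : ZLoc p) ∣ θ - g := by
    rintro k ⟨θ, h, ⟨y, hy⟩⟩
    obtain ⟨q, hq⟩ := one_add_pow_expansion ((p : ZLoc p) * k * θ) p
    obtain ⟨c, hc⟩ : p ∣ p.choose 2 :=
      hp.out.dvd_choose_self two_ne_zero (by
        have := hp.out.two_le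
        rcases hodd with ⟨m, rfl⟩; omega)
    refine ⟨θ + p * (c * k * θ ^ 2 + k ^ 2 * θ ^ 3 * q), ?_,
      ⟨y + (c * k * θ ^ 2 + k ^ 2 * θ ^ 3 * q), by linear_combination hy⟩⟩
    rw [mul_comm p k, pow_mul, h, hq, hc]
    push_cast
    ring
  have h3 : ∀ k : ℕ, ∃ θ : ZLoc p, (ρ : ZLoc p) ^ k = 1 + p * k * θ ∧ (p : ZLoc p) ∣ θ - g := by
    intro k
    rcases Nat.eq_zero_or_pos k with rfl | hk
    · exact ⟨g, by simp⟩
    · obtain ⟨v, m, hm, rfl⟩ := Nat.exists_eq_pow_mul_and_not_dvd hk.ne' p hp.out.ne_one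
      clear hk
      induction v with
      | zero => simpa using h1 m hm
      | succ v ih =>
        rw [pow_succ', mul_assoc]
        exact h2 _ ih
  obtain ⟨k, rfl | rfl⟩ := j.eq_nat_or_neg
  · simpa using h3 k
  · obtain ⟨θ, h, ⟨y, hy⟩⟩ := h3 k
    set τ : ZLoc p := ((ρ ^ (-(k : ℤ)) : (ZLoc p)ˣ) : ZLoc p) with hτ
    have hinv : τ * (ρ : ZLoc p) ^ k = 1 := by
      rw [hτ, ← Units.val_pow_eq_pow_val, ← Units.val_mul]
      simp
    rw [h] at hinv
    refine ⟨θ * τ, ?_, ⟨y - k * θ ^ 2 * τ, ?_⟩⟩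
    · push_cast
      linear_combination hinv
    · linear_combination hy + θ * hinv

theorem nuE_cases (x : ℤ) : (x = 0 ∧ nuE p x = ⊤) ∨
    ∃ (v : ℕ) (x₀ : ℤ), x = p ^ v * x₀ ∧ ¬ (p : ℤ) ∣ x₀ ∧ nuE p x = v := by
  by_cases hx : x = 0
  · left; simp [hx, nuE]
  · right
    have hpv : padicValInt p x = multiplicity (p : ℤ) x :=
      padicValInt.of_ne_one_ne_zero hp.out.ne_one hx
    have hfin : FiniteMultiplicity (p : ℤ) x :=
      Int.finiteMultiplicity_iff.2 ⟨by simpa using hp.out.ne_one, hx⟩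
    obtain ⟨x₀, h1, h2⟩ := hfin.exists_eq_pow_mul_and_not_dvd
    exact ⟨padicValInt p x, x₀, by rw [hpv]; exact h1, h2, by simp [nuE, hx]⟩

theorem eq_of_coe_eq_min_top {e k M : ℕ} (h : (e : ℕ∞) = min ((⊤ : ℕ∞) + k) (M : ℕ∞)) : e = M := by
  rw [top_add, top_inf_eq] at h
  exact_mod_cast h

theorem eq_of_coe_eq_min {e v k M : ℕ} (h : (e : ℕ∞) = min ((v : ℕ∞) + k) (M : ℕ∞)) :
    e = min (v + k) M := by
  have h' : (e : ℕ∞) = ((min (v + k) M : ℕ) : ℕ∞) := by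
    rw [h, (Nat.mono_cast (α := ℕ∞)).map_min, Nat.cast_add]
  exact_mod_cast h'

theorem pow_dvd_mul_iff {y : ZLoc p} (hy : IsUnit y) {v M s : ℕ} (hs : s + min v M = M)
    (z : ZLoc p) : (p : ZLoc p) ^ M ∣ p ^ v * y * z ↔ (p : ZLoc p) ^ s ∣ z := by
  rcases le_total M v with h | h
  · obtain rfl : s = 0 := by omega
    simp only [pow_zero, isUnit_one.dvd, iff_true]
    exact ((pow_dvd_pow _ h).mul_right _).mul_right _
  · obtain rfl : M = v + s := by omega
    rw [pow_add, mul_assoc, mul_dvd_mul_iff_left (pow_ne_zero _ ZLoc_p_ne_zero), hy.dvd_mul_left]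

theorem isUnit_of_dvd_sub {x y : ZLoc p} (hy : IsUnit y) (h : (p : ZLoc p) ∣ x - y) :
    IsUnit x := by
  obtain ⟨q, hq⟩ := h
  rw [show x = y + p * q by linear_combination hq]
  exact isUnit_add_mul hy q

/-- The cyclic structure of `K / N` in all cases `m = n + (p-1) i`. Here `ρ = r^(p-1)`, `U = r^n`,
`a = r^n - r^m` and `d = r^(n+T) - r^m`; `exists_theta` gives the valuations of `a` and `d`, and
that of `c` when `n = 1`, up to the relevant precision. The parameter `n` is shifted by one. -/
theorem cycData_main (hodd : Odd p) (ρ U : (ZLoc p)ˣ) (g u b w a d : ZLoc p) (hg : IsUnit g)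
    (hρ : (ρ : ZLoc p) = 1 + p * g) (hu : IsUnit u) (n t T : ℕ) (hT : 1 ≤ T) (htp : ¬ p ∣ t)
    (hb : p * b = u * (d - a)) (hw : w = u * (p ^ T - 1)) (i : ℤ)
    (ha : a = U * (1 - (ρ ^ i : (ZLoc p)ˣ)))
    (hd : d = U * ((ρ ^ (t : ℤ) : (ZLoc p)ˣ) - (ρ ^ i : (ZLoc p)ˣ)))
    (e : ℕ) (he1 : ¬ ((p : ℤ) ∣ i - t) → (e : ℕ∞) = min (nuE p i + 2) ((n + 1 : ℕ) : ℕ∞))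
    (he2 : ((p : ℤ) ∣ i - t) → 1 < n + 1 →
            (e : ℕ∞) = min (nuE p (i - t) + 2) ((T + (n + 1) : ℕ) : ℕ∞))
    (he3 : ((p : ℤ) ∣ i - t) → n + 1 = 1 →
            (e : ℕ∞) = min (nuE p (i - t - t * (p : ℤ) ^ T) + 1) ((T + 2 : ℕ) : ℕ∞)) :
    ∃ c, p * c = p * b - w * a ∧ CycData (p : ZLoc p) w a c d n T e := by
  have hπ : (p : ZLoc p) ≠ 0 := ZLoc_p_ne_zero
  obtain ⟨T', rfl⟩ := Nat.exists_eq_add_of_le' hT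
  obtain ⟨θi, hθi, hθig⟩ := exists_theta hodd ρ g hρ i
  obtain ⟨θj, hθj, hθjg⟩ := exists_theta hodd ρ g hρ (i - t)
  obtain ⟨θt, hθt, hθtg⟩ := exists_theta hodd ρ g hρ t
  have hθiu := isUnit_of_dvd_sub hg hθig
  have hθju := isUnit_of_dvd_sub hg hθjg
  have hθtu := isUnit_of_dvd_sub hg hθtg
  have htu : IsUnit ((t : ℤ) : ZLoc p) := isUnit_intCast (by rwa [Int.natCast_dvd_natCast])
  have hsplit : ((ρ ^ i : (ZLoc p)ˣ) : ZLoc p) =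
      (ρ ^ (t : ℤ) : (ZLoc p)ˣ) * (ρ ^ (i - t) : (ZLoc p)ˣ) := by
    rw [← Units.val_mul, ← zpow_add]; congr 2; ring
  set τ : (ZLoc p)ˣ := ρ ^ (t : ℤ) with hτ
  have ha' : a = p * (- U * i * θi) := by rw [ha, hθi]; ring
  have hd' : d = p * (- U * τ * (i - t : ℤ) * θj) := by rw [hd, hsplit, hθj]; ring
  have hbu : IsUnit b := by
    have : b = u * U * (t : ℤ) * θt := by
      apply mul_left_cancel₀ hπ
      linear_combination hb + u * hd - u * ha + u * U * hθt
    rw [this]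
    exact ((hu.mul U.isUnit).mul htu).mul hθtu
  set c : ZLoc p := b - w * (- U * i * θi) with hcdef
  have hc1 : p * c = p * b - w * a := by rw [hcdef, ha']; ring
  have hc2 : p * c = u * (d - p ^ (T' + 1) * a) := by
    linear_combination hc1 + hb - a * hw
  have hI : p * c + w * d = p ^ (T' + 1 + 1) * b := by
    linear_combination hc2 + d * hw - (p : ZLoc p) ^ (T' + 1) * hb
  have hc3 : c = - u * U * (τ * (i - t : ℤ) * θj - p ^ (T' + 1) * i * θi) := by
    apply mul_left_cancel₀ hπ
    linear_combination hc2 + u * hd' - u * (p : ZLoc p) ^ (T' + 1) * ha'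
  refine ⟨c, hc1, ?_⟩
  by_cases hit : (p : ℤ) ∣ i - t
  · have hiu : IsUnit (i : ZLoc p) := by
      apply isUnit_intCast
      intro h
      have := (dvd_sub_right h).1 hit
      exact htp (Int.natCast_dvd_natCast.1 this)
    have ha₀ : IsUnit (- U * i * θi : ZLoc p) := ((U.isUnit.neg).mul hiu).mul hθiu
    rcases Nat.eq_zero_or_pos n with rfl | hn
    · have he := he3 hit rfl
      -- All the `θ` are congruent to `g`, so `c` is a unit times `i - t - t p^T` modulo `p^(T+1)`.
      have hτ1 : (p : ZLoc p) ∣ τ - 1 := ⟨(t : ℤ) * θt, by rw [hθt]; ring⟩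
      have hcong : (p : ZLoc p) ∣ t * τ * θj - i * θi := by
        have h0 : (p : ZLoc p) ∣ ((i - t : ℤ) : ZLoc p) := dvd_intCast_iff.2 hit
        obtain ⟨x1, h1⟩ := hτ1
        obtain ⟨x2, h2⟩ := hθjg
        obtain ⟨x3, h3⟩ := hθig
        obtain ⟨x4, h4⟩ := h0
        push_cast at h4
        exact ⟨t * θj * x1 + t * x2 - i * x3 - g * x4, by
          linear_combination t * θj * h1 + t * h2 - i * h3 - g * h4⟩
      obtain ⟨κ, hκ⟩ := hcong
      have hc4 : c = (- u * U * τ * θj) * (i - t - t * (p : ℤ) ^ (T' + 1) : ℤ)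
          + p ^ (T' + 1 + 1) * (- u * U * κ) := by
        rw [hc3]
        push_cast
        linear_combination - u * U * (p : ZLoc p) ^ (T' + 1) * hκ
      have hyu : IsUnit (- u * U * τ * θj : ZLoc p) :=
        (((hu.neg).mul U.isUnit).mul τ.isUnit).mul hθju
      have hwu : IsUnit w := by
        rw [show w = -u + p * (u * p ^ T') by rw [hw]; ring]
        exact isUnit_add_mul hu.neg _
      have hred : ∀ z, (p : ZLoc p) ^ (T' + 1 + 1) ∣ c * z ↔ (p : ZLoc p) ^ (T' + 1 + 1) ∣
          (- u * U * τ * θj) * (i - t - t * (p : ℤ) ^ (T' + 1) : ℤ) * z := by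
        intro z
        rw [hc4, add_mul]
        exact dvd_add_left ((dvd_mul_right _ _).mul_right _)
      rcases nuE_cases (p := p) (i - t - t * (p : ℤ) ^ (T' + 1)) with ⟨h0, hν⟩ | ⟨v, x₀, h0, hx₀, hν⟩
      · rw [hν] at he
        have he' : e = T' + 1 + 2 := eq_of_coe_eq_min_top he
        refine cycData_of_zero (b := b) hπ hI hwu ⟨_, ha'⟩ (f := 0) (by omega) fun z => ?_
        rw [hred, h0]
        simp
      · rw [hν] at he
        have he' : e = min (v + 1) (T' + 1 + 2) := eq_of_coe_eq_min he
        refine cycData_of_zero (b := b) hπ hI hwu ⟨_, ha'⟩ (f := T' + 1 + 2 - e) (by omega)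
          fun z => ?_
        rw [hred, h0, ← pow_dvd_mul_iff (hyu.mul (isUnit_intCast hx₀)) (v := v) (M := T' + 1 + 1)
          (s := T' + 1 + 2 - e) (by omega)]
        push_cast
        ring_nf
    · have he := he2 hit (by omega)
      rcases nuE_cases (p := p) (i - t) with ⟨h0, hν⟩ | ⟨v, x₀, h0, hx₀, hν⟩
      · rw [hν] at he
        have he' : e = n + 1 + (T' + 1) := by
          have : e = T' + 1 + (n + 1) := eq_of_coe_eq_min_top he
          omega
        subst he'
        refine cycData_of_dvd hπ hc2 hu (fun x hx y => isUnit_add_mul hx y) ha' ha₀ ?_ hn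
        rw [hd', h0]; simp
      · rw [hν] at he
        have he' : e = min (v + 2) (T' + 1 + (n + 1)) := eq_of_coe_eq_min he
        have hd'' : d = p ^ (v + 1) * (- U * τ * x₀ * θj) := by
          rw [hd', h0]; push_cast; ring
        by_cases hv : v + 1 ≤ n + (T' + 1)
        · obtain rfl : e = v + 2 := by omega
          exact cycData_of_pivot hπ hI hc2 hbu ha' ha₀ hd''
            (((U.isUnit.neg.mul τ.isUnit).mul (isUnit_intCast hx₀)).mul hθju) hn hv
        · obtain rfl : e = n + 1 + (T' + 1) := by omega
          refine cycData_of_dvd hπ hc2 hu (fun x hx y => isUnit_add_mul hx y) ha' ha₀ ?_ hn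
          rw [hd'']
          exact (pow_dvd_pow _ (by omega)).mul_right _
  · have he := he1 hit
    have hju : IsUnit ((i - t : ℤ) : ZLoc p) := isUnit_intCast hit
    have hcu : IsUnit c := by
      rw [show c = - u * U * (τ * (i - t : ℤ) * θj + p * (- p ^ T' * i * θi)) by rw [hc3]; ring]
      exact (hu.neg.mul U.isUnit).mul (isUnit_add_mul ((τ.isUnit.mul hju).mul hθju) _)
    rcases nuE_cases (p := p) i with ⟨h0, hν⟩ | ⟨v, x₀, h0, hx₀, hν⟩
    · rw [hν] at he
      have he' : e = n + 1 := eq_of_coe_eq_min_top he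
      refine cycData_of_isUnit hπ hI hbu hcu (s := 0) (by omega) (by omega) fun z => ?_
      rw [ha', h0]
      simp
    · rw [hν] at he
      have he' : e = min (v + 2) (n + 1) := eq_of_coe_eq_min he
      refine cycData_of_isUnit hπ hI hbu hcu (s := n + 1 - e) (by omega) (by omega) fun z => ?_
      have hyu : IsUnit (U * x₀ * θi * (U * τ * (i - t : ℤ) * θj) : ZLoc p) :=
        ((U.isUnit.mul (isUnit_intCast hx₀)).mul hθiu).mul
          (((U.isUnit.mul τ.isUnit).mul hju).mul hθju)
      rw [← pow_dvd_mul_iff hyu (v := v + 2) (M := n + 1) (s := n + 1 - e) (by omega)]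
      have : a * d = p ^ (v + 2) * (U * x₀ * θi * (U * τ * (i - t : ℤ) * θj)) := by
        have h0' : (i : ZLoc p) = p ^ v * x₀ := by rw [h0]; push_cast; rfl
        rw [ha', hd', h0']
        ring
      rw [this]

/-- Away from the congruence class of exponents, differences of powers of `r` are units. -/
theorem isUnit_zpow_sub (r : ℤ) (ru : (ZLoc p)ˣ) (hru : (ru : ZLoc p) = r)
    (hord : ∀ j : ℕ, (p : ℤ) ∣ r ^ j - 1 → p - 1 ∣ j) (k m : ℤ) (h : ¬ ((p : ℤ) - 1 ∣ m - k)) :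
    IsUnit (((ru ^ k : (ZLoc p)ˣ) : ZLoc p) - (ru ^ m : (ZLoc p)ˣ)) := by
  have hp1 : ((p - 1 : ℕ) : ℤ) = (p : ℤ) - 1 := by
    have := hp.out.one_le
    push_cast [this]; rfl
  have hnat : ∀ j : ℕ, ¬ ((p : ℤ) - 1 ∣ j) → IsUnit ((r : ZLoc p) ^ j - 1) := by
    intro j hj
    have := isUnit_intCast (p := p) (z := r ^ j - 1) fun h => hj (by
      rw [← hp1]; exact Int.natCast_dvd_natCast.2 (hord j h))
    simpa using this
  obtain ⟨j, hj | hj⟩ := (m - k).eq_nat_or_neg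
  · have : ((ru ^ k : (ZLoc p)ˣ) : ZLoc p) - (ru ^ m : (ZLoc p)ˣ) =
        - (ru ^ k : (ZLoc p)ˣ) * ((r : ZLoc p) ^ j - 1) := by
      rw [show m = k + j by omega, zpow_add, zpow_natCast, ← hru]
      push_cast
      ring
    rw [this]
    exact (Units.isUnit _).neg.mul (hnat j (by rwa [← hj]))
  · have : ((ru ^ k : (ZLoc p)ˣ) : ZLoc p) - (ru ^ m : (ZLoc p)ˣ) =
        (ru ^ m : (ZLoc p)ˣ) * ((r : ZLoc p) ^ j - 1) := by
      rw [show k = m + j by omega, zpow_add, zpow_natCast, ← hru]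
      push_cast
      ring
    rw [this]
    exact (Units.isUnit _).mul (hnat j (by rw [hj] at h; rwa [← dvd_neg]))

end powers

/-! ### Coordinates on the lattice -/

section coordinates
variable {p : ℕ} [hp : Fact p.Prime]

/-- The vector `α x + β y` of the lattice `F`, seen in `ℚ²`. -/
def vec (α β : ZLoc p) : Fin 2 → ℚ := ![(α : ℚ), (β : ℚ)]

theorem vec_inj {α β α' β' : ZLoc p} (h : vec α β = vec α' β') : α = α' ∧ β = β' :=
  ⟨Subtype.ext (by simpa [vec] using congrFun h 0), Subtype.ext (by simpa [vec] using congrFun h 1)⟩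

theorem vec_sub_smul (α β α' β' z : ZLoc p) :
    vec α β - z • vec α' β' = vec (α - z * α') (β - z * β') := by
  ext j
  fin_cases j <;> simp [vec, Subring.smul_def]

theorem smul_vec (α β z : ZLoc p) : z • vec α β = vec (z * α) (z * β) := by
  ext j
  fin_cases j <;> simp [vec, Subring.smul_def]

theorem mem_latt2_iff (v : Fin 2 → ℚ) : v ∈ latt2 p ↔ ∃ α β : ZLoc p, v = vec α β := by
  rw [latt2, Submodule.mem_span_pair]
  refine exists₂_congr fun α β => ?_
  rw [eq_comm]
  have : α • (![1, 0] : Fin 2 → ℚ) + β • (![0, 1] : Fin 2 → ℚ) = vec α β := by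
    ext j
    fin_cases j <;> simp [vec, Subring.smul_def]
  rw [this]

theorem vec_mem_span_iff (u : ZLoc p) (n T : ℕ) (α β : ZLoc p) :
    vec α β ∈ Submodule.span (ZLoc p)
      {![0, (p : ℚ) ^ (n + 1 + T)],
       ![(p : ℚ) ^ (n + 1), (u : ℚ) * (p : ℚ) ^ n * ((p : ℚ) ^ T - 1)]} ↔
      InN (p : ZLoc p) (u * (p ^ T - 1)) n T α β := by
  rw [Submodule.mem_span_pair, exists_comm]
  refine exists₂_congr fun s k => ?_
  have : k • (![0, (p : ℚ) ^ (n + 1 + T)] : Fin 2 → ℚ) +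
      s • (![(p : ℚ) ^ (n + 1), (u : ℚ) * (p : ℚ) ^ n * ((p : ℚ) ^ T - 1)] : Fin 2 → ℚ) =
      vec ((p : ZLoc p) ^ (n + 1) * s) (u * (p ^ T - 1) * p ^ n * s + p ^ (n + 1 + T) * k) := by
    ext j
    fin_cases j
    · simp [vec, Subring.smul_def, mul_comm]
    · simp [vec, Subring.smul_def]; ring
  rw [this]
  constructor
  · intro h
    obtain ⟨h1, h2⟩ := vec_inj h
    exact ⟨h1.symm, h2.symm⟩
  · rintro ⟨h1, h2⟩
    rw [h1, h2]

theorem exists_of_mem_span (u : ZLoc p) (n T : ℕ) (v : Fin 2 → ℚ)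
    (hv : v ∈ Submodule.span (ZLoc p)
      {![0, (p : ℚ) ^ (n + 1 + T)],
       ![(p : ℚ) ^ (n + 1), (u : ℚ) * (p : ℚ) ^ n * ((p : ℚ) ^ T - 1)]}) :
    ∃ α β : ZLoc p, v = vec α β := by
  rw [← mem_latt2_iff]
  refine Submodule.span_le.2 ?_ hv
  rintro _ (rfl | rfl)
  · exact (mem_latt2_iff _).2 ⟨0, p ^ (n + 1 + T), by simp [vec]⟩
  · exact (mem_latt2_iff _).2 ⟨p ^ (n + 1), u * p ^ n * (p ^ T - 1), by simp [vec]⟩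

end coordinates

/-- Davis' Proposition on `v₁`-periodic homotopy of sphere bundles with `α_t`
attaching map: odd-degree groups, via the kernel of `Ψ - r^m` on `F/N`. -/
theorem stmt4 (p : ℕ) [Fact p.Prime] (hodd : Odd p) (r : ℤ)
    (hr : ∀ v : (ZMod (p ^ 2))ˣ, ∃ j : ℕ, (v : ZMod (p ^ 2)) = (r : ZMod (p ^ 2)) ^ j)
    (u : ZLoc p) (hu : IsUnit u)
    (n t : ℕ) (hn : 1 ≤ n) (ht : 1 ≤ t) (htp : ¬ p ∣ t)
    -- `Ψ` is the `ℚ`-linear map with `Ψ(x) = r^n·x + (u/p)·r^n(r^{t(p-1)}-1)·y`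
    -- and `Ψ(y) = r^{n+t(p-1)}·y`
    (Ψ : (Fin 2 → ℚ) →ₗ[ℚ] (Fin 2 → ℚ))
    (hΨ : Ψ = Matrix.mulVecLin
      !![(r : ℚ) ^ n, 0;
         ((u : ℚ) / p) * (r : ℚ) ^ n * ((r : ℚ) ^ (t * (p - 1)) - 1),
           (r : ℚ) ^ (n + t * (p - 1))])
    -- `N` is the submodule generated by `p^{n+t(p-1)}·y` and
    -- `p^n·x + u·p^{n-1}(p^{t(p-1)}-1)·y`
    (N : Submodule (ZLoc p) (Fin 2 → ℚ))
    (hN : N = Submodule.span (ZLoc p)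
      {![0, (p : ℚ) ^ (n + t * (p - 1))],
       ![(p : ℚ) ^ n, (u : ℚ) * (p : ℚ) ^ (n - 1) * ((p : ℚ) ^ (t * (p - 1)) - 1)]}) :
    N.map (Ψ.restrictScalars (ZLoc p)) ≤ N ∧
    ∀ m : ℤ,
      ∃ φ : (↥(latt2 p) ⧸ Submodule.comap (latt2 p).subtype N) →ₗ[ZLoc p]
            (↥(latt2 p) ⧸ Submodule.comap (latt2 p).subtype N),
        -- `φ` is the endomorphism of `F/N` induced by `Ψ - r^m·id`
        (∀ v w : ↥(latt2 p), (w : Fin 2 → ℚ) = Ψ (v : Fin 2 → ℚ) - (r : ℚ) ^ m • (v : Fin 2 → ℚ) →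
          φ (Submodule.Quotient.mk v) = Submodule.Quotient.mk w) ∧
        (¬ ((p : ℤ) - 1 ∣ m - n) → Function.Injective φ) ∧
        (∀ i : ℤ, m = n + ((p : ℤ) - 1) * i → ∀ e : ℕ,
          (¬ ((p : ℤ) ∣ i - t) → (e : ℕ∞) = min (nuE p i + 2) (n : ℕ∞)) →
          (((p : ℤ) ∣ i - t) → 1 < n →
            (e : ℕ∞) = min (nuE p (i - t) + 2) ((t * (p - 1) + n : ℕ) : ℕ∞)) →
          (((p : ℤ) ∣ i - t) → n = 1 →
            (e : ℕ∞) = min (nuE p (i - t - t * (p : ℤ) ^ (t * (p - 1))) + 1)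
              ((t * (p - 1) + 2 : ℕ) : ℕ∞)) →
          Nonempty (↥(LinearMap.ker φ) ≃+ ZMod (p ^ e))) := by
  obtain ⟨n, rfl⟩ := Nat.exists_eq_add_of_le' hn
  simp only [Nat.add_sub_cancel] at hN
  obtain ⟨hrp, ⟨g, hg, hgp⟩, hord⟩ := generator_facts hodd r hr
  obtain ⟨ru, hru⟩ := isUnit_intCast hrp
  have hruQ : ((ru : ZLoc p) : ℚ) = r := by rw [hru]; simp
  have hπ : (p : ZLoc p) ≠ 0 := ZLoc_p_ne_zero
  have hp1 : 1 ≤ p := (Fact.out : p.Prime).one_le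
  have hp2 : 2 ≤ p := (Fact.out : p.Prime).two_le
  set T := t * (p - 1) with hTdef
  have hT : 1 ≤ T := Nat.mul_pos ht (by omega)
  set ρ : (ZLoc p)ˣ := ru ^ (p - 1) with hρdef
  have hρ : (ρ : ZLoc p) = 1 + p * (g : ZLoc p) := by
    rw [hρdef, Units.val_pow_eq_pow_val, hru]
    exact_mod_cast congrArg (Int.cast (R := ZLoc p)) hg
  have hρt : ((ρ ^ (t : ℤ) : (ZLoc p)ˣ) : ZLoc p) = (ru : ZLoc p) ^ T := by
    rw [hρdef, zpow_natCast, ← pow_mul, mul_comm, Units.val_pow_eq_pow_val]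
  obtain ⟨θ, hθ, -⟩ := exists_theta hodd ρ g hρ t
  rw [hρt] at hθ
  set w : ZLoc p := u * (p ^ T - 1) with hw
  set b : ZLoc p := u * ru ^ (n + 1) * t * θ with hb
  have hπb : p * b = u * ru ^ (n + 1) * (ru ^ T - 1) := by
    rw [hb, hθ]; push_cast; ring
  have hpQ : (p : ℚ) ≠ 0 := by exact_mod_cast (show p ≠ 0 by omega)
  have hbQ : (b : ℚ) = (u : ℚ) / p * r ^ (n + 1) * ((r : ℚ) ^ T - 1) := by
    have h := congrArg (Subtype.val) hπb
    push_cast at h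
    rw [hruQ] at h
    field_simp
    linear_combination h
  have hΨv : ∀ α β : ZLoc p, Ψ (vec α β) =
      vec (p := p) (ru ^ (n + 1) * α) (b * α + ru ^ (n + 1 + T) * β) := by
    intro α β
    rw [hΨ]
    ext j
    fin_cases j
    · simp [vec, Matrix.mulVec, dotProduct, hruQ]
    · simp [vec, Matrix.mulVec, dotProduct, hruQ, hbQ]
  have hNv : ∀ α β : ZLoc p, vec α β ∈ N ↔ InN (p : ZLoc p) w n T α β := by
    intro α β
    rw [hN]
    exact vec_mem_span_iff u n T α β
  have hNex : ∀ v ∈ N, ∃ α β : ZLoc p, v = vec α β := by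
    intro v hv
    rw [hN] at hv
    exact exists_of_mem_span u n T v hv
  have hΨN : ∀ v ∈ N, Ψ v ∈ N := by
    intro v hv
    obtain ⟨α, β, rfl⟩ := hNex v hv
    obtain ⟨s, k, rfl, rfl⟩ := (hNv _ _).1 hv
    rw [hΨv, hNv]
    refine ⟨ru ^ (n + 1) * s, s * b + ru ^ (n + 1 + T) * k, by ring, ?_⟩
    rw [hw]
    linear_combination - (p : ZLoc p) ^ n * s * (p ^ T - 1) * hπb
  refine ⟨?_, ?_⟩
  · rintro _ ⟨v, hv, rfl⟩
    exact hΨN v hv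
  intro m
  set R : ZLoc p := ((ru ^ m : (ZLoc p)ˣ) : ZLoc p) with hR
  have hRQ : (R : ℚ) = (r : ℚ) ^ m := by
    have h := map_zpow (Units.map (ZLoc p).subtype.toMonoidHom) ru m
    have h' := congrArg Units.val h
    rw [Units.val_zpow_eq_zpow_val] at h'
    rw [← hruQ]
    exact h'
  set a : ZLoc p := ru ^ (n + 1) - R with ha
  set d : ZLoc p := ru ^ (n + 1 + T) - R with hd
  have hbad : p * b = u * (d - a) := by
    rw [hπb, hd, ha]; ring
  let f₀ : (Fin 2 → ℚ) →ₗ[ZLoc p] (Fin 2 → ℚ) :=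
    Ψ.restrictScalars (ZLoc p) - R • LinearMap.id
  have hf₀ : ∀ v, f₀ v = Ψ v - R • v := fun v => rfl
  have hf₀v : ∀ α β : ZLoc p, f₀ (vec α β) = vec (a * α) (b * α + d * β) := by
    intro α β
    rw [hf₀, hΨv, vec_sub_smul]
    congr 1 <;> ring
  have hf₀L : ∀ v ∈ latt2 p, f₀ v ∈ latt2 p := by
    intro v hv
    obtain ⟨α, β, rfl⟩ := (mem_latt2_iff v).1 hv
    rw [hf₀v]
    exact (mem_latt2_iff _).2 ⟨_, _, rfl⟩
  let f : latt2 p →ₗ[ZLoc p] latt2 p := f₀.restrict hf₀L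
  have hf : ∀ v : latt2 p, ((f v : latt2 p) : Fin 2 → ℚ) = f₀ v := fun v => rfl
  set N' : Submodule (ZLoc p) (latt2 p) := Submodule.comap (latt2 p).subtype N with hN'
  have hmemN' : ∀ v : latt2 p, v ∈ N' ↔ (v : Fin 2 → ℚ) ∈ N := fun v => Iff.rfl
  have hfN : N' ≤ N'.comap f := by
    intro v hv
    rw [Submodule.mem_comap, hmemN', hf, hf₀]
    exact N.sub_mem (hΨN _ hv) (N.smul_mem _ hv)
  let φ : (latt2 p ⧸ N') →ₗ[ZLoc p] (latt2 p ⧸ N') := N'.mapQ N' f hfN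
  have hφ : ∀ v : latt2 p, φ (Submodule.Quotient.mk v) = Submodule.Quotient.mk (f v) :=
    fun v => rfl
  have hφ0 : ∀ v : latt2 p, φ (Submodule.Quotient.mk v) = 0 ↔ f₀ v ∈ N := by
    intro v
    rw [hφ, Submodule.Quotient.mk_eq_zero, hmemN', hf]
  refine ⟨φ, ?_, ?_, ?_⟩
  · intro v x hx
    rw [hφ]
    congr 1
    apply Subtype.ext
    rw [hf, hf₀, hx, ← hRQ]
    rfl
  · intro hm
    have hau : IsUnit a := by
      have := isUnit_zpow_sub r ru hru hord ((n + 1 : ℕ) : ℤ) m hm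
      rwa [zpow_natCast, Units.val_pow_eq_pow_val] at this
    have hdu : IsUnit d := by
      have := isUnit_zpow_sub r ru hru hord ((n + 1 + T : ℕ) : ℤ) m fun h => hm (by
        have hTz : (T : ℤ) = (p - 1) * t := by
          rw [hTdef]; push_cast [hp1]; ring
        have h2 : m - ((n + 1 : ℕ) : ℤ) = (m - ((n + 1 + T : ℕ) : ℤ)) + (p - 1) * t := by
          rw [← hTz]; push_cast; ring
        rw [h2]
        exact dvd_add h (dvd_mul_right _ _))
      rwa [zpow_natCast, Units.val_pow_eq_pow_val] at this
    rw [← LinearMap.ker_eq_bot, LinearMap.ker_eq_bot']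
    intro x hx
    obtain ⟨v, rfl⟩ := Submodule.Quotient.mk_surjective _ x
    rw [hφ0] at hx
    rw [Submodule.Quotient.mk_eq_zero, hmemN']
    obtain ⟨α, β, hv⟩ := (mem_latt2_iff _).1 v.2
    rw [hv, hf₀v, hNv] at hx
    rw [hv, hNv]
    exact inN_of_units hbad hw hau hdu hπ hx
  · intro i hi e he1 he2 he3
    have hRi : R = ((ru ^ (n + 1) : (ZLoc p)ˣ) : ZLoc p) * (ρ ^ i : (ZLoc p)ˣ) := by
      have hp1z : (p : ℤ) - 1 = ((p - 1 : ℕ) : ℤ) := by push_cast [hp1]; rfl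
      rw [hR, hi, hρdef, hp1z, zpow_add, zpow_natCast, Units.val_mul, zpow_mul, zpow_natCast]
    obtain ⟨c, hc, x, y, hK, hgen, htors⟩ :=
      cycData_main hodd ρ (ru ^ (n + 1)) g u b w a d (isUnit_intCast hgp) hρ hu n t T hT htp
        hbad hw i (by rw [ha, hRi, Units.val_pow_eq_pow_val]; ring)
        (by rw [hd, hRi, hρt, Units.val_pow_eq_pow_val]; ring) e he1 he2 he3
    have hker : ∀ α β : ZLoc p, f₀ (vec α β) ∈ N ↔ InK (p : ZLoc p) a c d n T α β := by
      intro α β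
      rw [hf₀v, hNv]
      exact inN_image_iff hπ hc α β
    let G : latt2 p := ⟨vec x y, (mem_latt2_iff _).2 ⟨x, y, rfl⟩⟩
    have hG : (Submodule.Quotient.mk G : latt2 p ⧸ N') ∈ LinearMap.ker φ := by
      rw [LinearMap.mem_ker, hφ0]
      exact (hker x y).2 hK
    refine nonempty_equiv_zmod (⟨Submodule.Quotient.mk G, hG⟩ : LinearMap.ker φ) e ?_ ?_
    · rintro ⟨q, hq⟩
      obtain ⟨v, rfl⟩ := Submodule.Quotient.mk_surjective _ q
      rw [LinearMap.mem_ker, hφ0] at hq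
      obtain ⟨α, β, hv⟩ := (mem_latt2_iff _).1 v.2
      rw [hv, hker] at hq
      obtain ⟨z, hz⟩ := hgen α β hq
      refine ⟨z, Subtype.ext ?_⟩
      change (Submodule.Quotient.mk v : latt2 p ⧸ N') = z • Submodule.Quotient.mk G
      rw [← Submodule.Quotient.mk_smul, Submodule.Quotient.eq, hmemN']
      change (v : Fin 2 → ℚ) - z • vec x y ∈ N
      rw [hv, vec_sub_smul, hNv]
      exact hz
    · intro z
      rw [← htors z, ← hNv, ← smul_vec, Subtype.ext_iff]
      change z • (Submodule.Quotient.mk G : latt2 p ⧸ N') = 0 ↔ _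
      rw [← Submodule.Quotient.mk_smul, Submodule.Quotient.mk_eq_zero, hmemN']
      rfl

end
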